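/- The infinite series identity 45π/4 = Σ_{k=0}^{∞} (4/27)^k · [(1)_k (1/2)_k (1/2)_k (1/2)_k] / [(7/6)_k (5/4)_k (7/4)_k (11/6)_k] · (184k³ + 338k² + 193k + 32) holds, where the sum is over natural numbers k and all quantities are real numbers. -/

import Mathlib

noncomputable def risingFactorial (a : ℝ) (k : ℕ) : ℝ := ∏ i ∈ Finset.range k, (a + i)

open Filter Topology

lemma rf_succ (a : ℝ) (k : ℕ) : risingFactorial a (k+1) = risingFactorial a k * (a + k) := by
  simp [risingFactorial, Finset.prod_range_succ]

lemma rf_zero (a : ℝ) : risingFactorial a 0 = 1 := by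
  simp [risingFactorial]

lemma rf_pos {a : ℝ} (ha : 0 < a) (k : ℕ) : 0 < risingFactorial a k := by
  unfold risingFactorial
  exact Finset.prod_pos fun i _ => by positivity

/-- The positive hypergeometric kernel. -/
noncomputable def PP (n k : ℕ) : ℝ :=
  risingFactorial 1 (2*n+k) * risingFactorial (1/2) (n+k) * risingFactorial (1/2) k
    * risingFactorial (1/2) n * risingFactorial 1 (2*n) /
  (risingFactorial 1 (n+k) * risingFactorial (3/2) (2*n+k) * risingFactorial (3/2) (3*n+k))

lemma PP_pos (n k : ℕ) : 0 < PP n k := by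
  unfold PP
  have h1 := fun m => rf_pos (a := 1) (by norm_num) m
  have h2 := fun m => rf_pos (a := 1/2) (by norm_num) m
  have h3 := fun m => rf_pos (a := 3/2) (by norm_num) m
  have := h1 (2*n+k); have := h2 (n+k); have := h2 k; have := h2 n; have := h1 (2*n)
  have := h1 (n+k); have := h3 (2*n+k); have := h3 (3*n+k)
  positivity

noncomputable def rn (n k : ℝ) : ℝ :=
  (2*n+1+k)*(2*n+2+k)*(n+k+1/2)*(n+1/2)*(2*n+1)*(2*n+2) /
   ((n+k+1)*(2*n+3/2+k)*(2*n+5/2+k)*(3*n+3/2+k)*(3*n+5/2+k)*(3*n+7/2+k))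

noncomputable def rk (n k : ℝ) : ℝ :=
  (2*n+1+k)*(n+1/2+k)*(1/2+k)/((n+1+k)*(2*n+3/2+k)*(3*n+3/2+k))

lemma PP_n (n k : ℕ) : PP (n+1) k = PP n k * rn n k := by
  unfold PP rn
  have e1 : 2*(n+1)+k = (2*n+k)+1+1 := by ring
  have e2 : n+1+k = (n+k)+1 := by ring
  have e3 : 2*(n+1) = 2*n+1+1 := by ring
  have e4 : 3*(n+1)+k = (3*n+k)+1+1+1 := by ring
  rw [e1, e2, e3, e4]
  simp only [rf_succ]
  have h1 := fun m => (rf_pos (a := 1) (by norm_num) m)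
  have h3 := fun m => (rf_pos (a := 3/2) (by norm_num) m)
  have := (h1 (n+k)).ne'; have := (h3 (2*n+k)).ne'; have := (h3 (3*n+k)).ne'
  push_cast
  rw [div_mul_div_comm, div_eq_div_iff (by positivity) (by positivity)]
  ring

lemma PP_k (n k : ℕ) : PP n (k+1) = PP n k * rk n k := by
  unfold PP rk
  simp only [← add_assoc, rf_succ]
  have h1 := fun m => (rf_pos (a := 1) (by norm_num) m)
  have h3 := fun m => (rf_pos (a := 3/2) (by norm_num) m)
  have := (h1 (n+k)).ne'; have := (h3 (2*n+k)).ne'; have := (h3 (3*n+k)).ne'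
  push_cast
  rw [div_mul_div_comm, div_eq_div_iff (by positivity) (by positivity)]
  ring

noncomputable def qq (n k : ℝ) : ℝ :=
  4 + 113/8*k + 61/4*k^2 + 13/2*k^3 + k^4 + 257/8*n + 311/4*n*k + 107/2*n*k^2 + 11*n*k^3
   + 181/2*n^2 + 273/2*n^2*k + 45*n^2*k^2 + 215/2*n^3 + 77*n^3*k + 46*n^4

noncomputable def dd (n k : ℝ) : ℝ := (2*n+3/2+k)*(3*n+3/2+k)*(3*n+5/2+k)

noncomputable def FF (n k : ℕ) : ℝ := (-1)^k * ((3*n+1+2*k) * PP n k)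
noncomputable def GG (n k : ℕ) : ℝ := (-1)^k * (PP n k * (qq n k / dd n k))

lemma wz_alg (n k : ℝ) (hn : 0 ≤ n) (hk : 0 ≤ k) :
    (3*(n+1)+1+2*k) * rn n k - (3*n+1+2*k) = - (rk n k * (qq n (k+1) / dd n (k+1))) - qq n k / dd n k := by
  unfold rn rk qq dd
  have : n+k+1 ≠ 0 := by positivity
  have : n+1+k ≠ 0 := by positivity
  have : 2*n+3/2+k ≠ 0 := by positivity
  have : 2*n+5/2+k ≠ 0 := by positivity
  have : 3*n+3/2+k ≠ 0 := by positivity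
  have : 3*n+5/2+k ≠ 0 := by positivity
  have : 3*n+7/2+k ≠ 0 := by positivity
  have e1 : 2*n+3/2+(k+1) = 2*n+5/2+k := by ring
  have e2 : 3*n+3/2+(k+1) = 3*n+5/2+k := by ring
  have e3 : 3*n+5/2+(k+1) = 3*n+7/2+k := by ring
  have e4 : n+1+k = n+k+1 := by ring
  rw [e1, e2, e3, e4]
  generalize ha : n+k+1 = a at *
  generalize hb : 2*n+3/2+k = b at *
  generalize hc : 2*n+5/2+k = c at *
  generalize hd : 3*n+3/2+k = d at *
  generalize he : 3*n+5/2+k = e at *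
  generalize hf : 3*n+7/2+k = f at *
  rw [← sub_eq_zero]
  field_simp
  subst ha hb hc hd he hf
  ring

lemma wz (n k : ℕ) : FF (n+1) k - FF n k = GG n (k+1) - GG n k := by
  unfold FF GG
  rw [PP_n, PP_k]
  have := wz_alg n k (by positivity) (by positivity)
  push_cast
  rw [pow_succ]
  linear_combination (-1)^k * PP n k * this

lemma wz_sum (N K : ℕ) : ∑ n ∈ Finset.range N, GG n 0 =
    ∑ k ∈ Finset.range K, FF 0 k - ∑ k ∈ Finset.range K, FF N k + ∑ n ∈ Finset.range N, GG n K := by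
  induction N with
  | zero => simp
  | succ N ih =>
    rw [Finset.sum_range_succ, Finset.sum_range_succ, ih]
    have h : ∑ k ∈ Finset.range K, (FF (N+1) k - FF N k) = GG N K - GG N 0 := by
      simp only [wz]
      exact Finset.sum_range_sub (fun k => GG N k) K
    rw [Finset.sum_sub_distrib] at h
    linarith

lemma PP_zero (k : ℕ) : PP 0 k = 1/(2*k+1)^2 := by
  induction k with
  | zero => simp [PP, rf_zero]
  | succ k ih =>
    rw [PP_k, ih]
    unfold rk
    push_cast
    have : (k:ℝ)+1 ≠ 0 := by positivity
    rw [div_mul_div_comm, div_eq_div_iff (by positivity) (by positivity)]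
    ring

lemma FF_zero (k : ℕ) : FF 0 k = (-1)^k / (2*k+1) := by
  unfold FF
  rw [PP_zero]
  push_cast
  have : (2*(k:ℝ)+1) ≠ 0 := by positivity
  field_simp
  ring

lemma abs_FF (n k : ℕ) : |FF n k| = (3*n+1+2*k) * PP n k := by
  unfold FF
  rw [abs_mul, abs_pow, abs_neg, abs_one, one_pow, one_mul]
  exact abs_of_nonneg (mul_nonneg (by positivity) (PP_pos n k).le)

lemma rn_bound (n k : ℝ) (hn : 0 ≤ n) (hk : 0 ≤ k) : 
    rn n k ≤ (n+1/2)*(2*n+1)*(2*n+2)/((3*n+3/2+k)*(3*n+5/2+k)*(3*n+7/2+k)) := by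
  have h : rn n k = ((2*n+1+k)/(2*n+3/2+k)) * ((2*n+2+k)/(2*n+5/2+k)) * ((n+k+1/2)/(n+k+1)) *
     ((n+1/2)*(2*n+1)*(2*n+2)/((3*n+3/2+k)*(3*n+5/2+k)*(3*n+7/2+k))) := by
    unfold rn
    rw [div_mul_div_comm, div_mul_div_comm, div_mul_div_comm]
    congr 1 <;> ring
  rw [h]
  apply mul_le_of_le_one_left (by positivity)
  have h1 : (2*n+1+k)/(2*n+3/2+k) ≤ 1 := by rw [div_le_one (by positivity)]; linarith
  have h2 : (2*n+2+k)/(2*n+5/2+k) ≤ 1 := by rw [div_le_one (by positivity)]; linarith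
  have h3 : (n+k+1/2)/(n+k+1) ≤ 1 := by rw [div_le_one (by positivity)]; linarith
  exact mul_le_one₀ (mul_le_one₀ h1 (by positivity) h2) (by positivity) h3

lemma rn_bound2 (n k : ℝ) (hn : 0 ≤ n) (hk : 0 ≤ k) : rn n k ≤ 4/27 := by
  refine (rn_bound n k hn hk).trans ?_
  have h : (n+1/2)*(2*n+1)*(2*n+2)/((3*n+3/2+k)*(3*n+5/2+k)*(3*n+7/2+k)) ≤
     (n+1/2)*(2*n+1)*(2*n+2)/((3*n+3/2)*(3*n+3/2)*(3*n+3)) := by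
    have h1 : 3*n+3/2 ≤ 3*n+3/2+k := by linarith
    have h2 : 3*n+3/2 ≤ 3*n+5/2+k := by linarith
    have h3 : 3*n+3 ≤ 3*n+7/2+k := by linarith
    exact div_le_div_of_nonneg_left (by positivity) (by positivity)
      (mul_le_mul (mul_le_mul h1 h2 (by positivity) (by positivity)) h3 (by positivity) (by positivity))
  refine h.trans ?_
  rw [div_le_div_iff₀ (by positivity) (by positivity)]
  apply le_of_eq; ring

lemma FF_step (n k : ℕ) : |FF (n+1) k| ≤ 16/27 * |FF n k| := by
  rw [abs_FF, abs_FF, PP_n]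
  have h := rn_bound2 n k (by positivity) (by positivity)
  have hp := PP_pos n k
  push_cast
  calc (3*((n:ℝ)+1)+1+2*k) * (PP n k * rn n k) ≤ (4*(3*n+1+2*k)) * (PP n k * (4/27)) := by
        have hr : 0 ≤ rn n k := by unfold rn; positivity
        have hn : (0:ℝ) ≤ n := by positivity
        have hk : (0:ℝ) ≤ k := by positivity
        exact mul_le_mul (by linarith) (mul_le_mul_of_nonneg_left h hp.le) (by positivity) (by positivity)
    _ = _ := by ring

lemma FF_one (k : ℕ) : |FF 1 k| ≤ 4 / ((k:ℝ)+1)^2 := by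
  have e : PP 1 k = PP 0 k * rn (0:ℕ) k := PP_n 0 k
  rw [abs_FF, e, PP_zero]
  have h := rn_bound 0 k le_rfl (by positivity)
  push_cast
  have hk : (0:ℝ) ≤ k := by positivity
  have h' : rn 0 k ≤ 1/((k:ℝ)+1)^2 := by
    refine h.trans ?_
    rw [div_le_div_iff₀ (by positivity) (by positivity)]
    nlinarith [mul_nonneg hk hk, mul_nonneg (mul_nonneg hk hk) hk]
  calc (3*(1:ℝ)+1+2*k) * (1/(2*k+1)^2 * rn 0 k) ≤ (4*(2*k+1)^2) * (1/(2*k+1)^2 * (1/((k:ℝ)+1)^2)) := by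
        have hr : 0 ≤ rn 0 k := by unfold rn; positivity
        exact mul_le_mul (by nlinarith) (mul_le_mul_of_nonneg_left h' (by positivity)) (by positivity) (by positivity)
    _ = _ := by field_simp

lemma FF_bound (n k : ℕ) : |FF (n+1) k| ≤ (16/27)^n * (4 / ((k:ℝ)+1)^2) := by
  induction n with
  | zero => simpa using FF_one k
  | succ n ih =>
    refine (FF_step (n+1) k).trans ?_
    rw [pow_succ]; linarith

lemma FF_sum_bound : ∃ C : ℝ, ∀ N K : ℕ, |∑ k ∈ Finset.range K, FF (N+1) k| ≤ (16/27)^N * C := by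
  have hs : Summable (fun k : ℕ => 4 / ((k:ℝ)+1)^2) := by
    have h := (summable_nat_add_iff 1).2 (Real.summable_one_div_nat_pow.2 (one_lt_two))
    have h2 := h.mul_left (4:ℝ)
    refine h2.congr fun k => ?_
    push_cast; ring
  refine ⟨∑' k : ℕ, 4 / ((k:ℝ)+1)^2, fun N K => ?_⟩
  calc _ ≤ ∑ k ∈ Finset.range K, |FF (N+1) k| := Finset.abs_sum_le_sum_abs _ _
    _ ≤ ∑ k ∈ Finset.range K, (16/27)^N * (4 / ((k:ℝ)+1)^2) := Finset.sum_le_sum fun k _ => FF_bound N k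
    _ = (16/27)^N * ∑ k ∈ Finset.range K, (4 / ((k:ℝ)+1)^2) := by rw [Finset.mul_sum]
    _ ≤ _ := by
      gcongr
      exact hs.sum_le_tsum _ fun i _ => by positivity

lemma FF_le (n k : ℕ) : |FF n k| ≤ 1/((k:ℝ)+1) := by
  induction n with
  | zero =>
    rw [FF_zero, abs_div, abs_pow, abs_neg, abs_one, one_pow]
    have hk : (0:ℝ) ≤ k := by positivity
    rw [abs_of_pos (by positivity)]
    gcongr
    linarith
  | succ n ih =>
    have := FF_step n k
    have := abs_nonneg (FF n k)
    linarith

lemma qd_bound (n k : ℝ) (hn : 0 ≤ n) (hk : 0 ≤ k) :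
    qq n k / dd n k ≤ qq n 1 * (3*n+1+2*k) := by
  have hq : qq n k ≤ qq n 1 * (k+1)^4 := by
    have h1 : (1:ℝ) ≤ (k+1)^4 := one_le_pow₀ (by linarith)
    have k2 : 0 ≤ k^2 := by positivity
    have k3 : 0 ≤ k^3 := by positivity
    have k4 : 0 ≤ k^4 := by positivity
    have e : (k+1)^4 = k^4+4*k^3+6*k^2+4*k+1 := by ring
    have a1 : k ≤ (k+1)^4 := by linarith
    have a2 : k^2 ≤ (k+1)^4 := by linarith
    have a3 : k^3 ≤ (k+1)^4 := by linarith
    have a4 : k^4 ≤ (k+1)^4 := by linarith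
    generalize (k+1)^4 = w at *
    calc qq n k ≤ 4*w + 113/8*w + 61/4*w + 13/2*w + w + 257/8*n*w + 311/4*n*w + 107/2*n*w + 11*n*w
   + 181/2*n^2*w + 273/2*n^2*w + 45*n^2*w + 215/2*n^3*w + 77*n^3*w + 46*n^4*w := by
          unfold qq
          have n2 : 0 ≤ n^2 := by positivity
          have n3 : 0 ≤ n^3 := by positivity
          have n4 : 0 ≤ n^4 := by positivity
          have b0 := mul_le_mul_of_nonneg_left h1 hn
          have b1 := mul_le_mul_of_nonneg_left a1 hn
          have b2 := mul_le_mul_of_nonneg_left a2 hn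
          have b3 := mul_le_mul_of_nonneg_left a3 hn
          have c0 := mul_le_mul_of_nonneg_left h1 n2
          have c1 := mul_le_mul_of_nonneg_left a1 n2
          have c2 := mul_le_mul_of_nonneg_left a2 n2
          have d0 := mul_le_mul_of_nonneg_left h1 n3
          have d1 := mul_le_mul_of_nonneg_left a1 n3
          have e0 := mul_le_mul_of_nonneg_left h1 n4
          linarith
      _ = _ := by unfold qq; ring
  have hd : (k+1)^3 ≤ dd n k := by
    unfold dd
    calc (k+1)^3 = (k+1)*(k+1)*(k+1) := by ring
      _ ≤ _ := mul_le_mul (mul_le_mul (by linarith) (by linarith) (by positivity) (by positivity))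
          (by linarith) (by positivity) (by positivity)
  have hq1 : 0 ≤ qq n 1 := by unfold qq; positivity
  have hd0 : 0 < dd n k := by unfold dd; positivity
  rw [div_le_iff₀ hd0]
  calc _ ≤ qq n 1 * (k+1)^4 := hq
    _ = qq n 1 * (k+1) * (k+1)^3 := by ring
    _ ≤ _ := mul_le_mul (mul_le_mul_of_nonneg_left (by linarith) hq1) hd (by positivity) (by positivity)

lemma GG_tendsto (n : ℕ) : Tendsto (fun k => GG n k) atTop (𝓝 0) := by
  have h0 : Tendsto (fun k : ℕ => qq n 1 * (1/((k:ℝ)+1))) atTop (𝓝 0) := by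
    simpa using (tendsto_one_div_add_atTop_nhds_zero_nat (𝕜 := ℝ)).const_mul (qq n 1)
  refine squeeze_zero_norm (fun k => ?_) h0
  have hq1 : 0 ≤ qq n 1 := by unfold qq; positivity
  have hqd : 0 ≤ qq n k / dd n k := by unfold qq dd; positivity
  have hP := PP_pos n k
  have h := qd_bound n k (by positivity) (by positivity)
  have hF := FF_le n k
  rw [abs_FF] at hF
  rw [Real.norm_eq_abs]
  unfold GG
  rw [abs_mul, abs_pow, abs_neg, abs_one, one_pow, one_mul, abs_of_nonneg (by positivity)]
  calc _ ≤ PP n k * (qq n 1 * (3*n+1+2*k)) := by gcongr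
    _ = qq n 1 * ((3*n+1+2*k) * PP n k) := by ring
    _ ≤ _ := by gcongr

lemma leibniz : Tendsto (fun K => ∑ k ∈ Finset.range K, FF 0 k) atTop (𝓝 (Real.pi/4)) := by
  simp only [FF_zero]
  exact Real.tendsto_sum_pi_div_four

lemma GG_sum : Tendsto (fun N => ∑ n ∈ Finset.range N, GG n 0) atTop (𝓝 (Real.pi/4)) := by
  obtain ⟨C, hC⟩ := FF_sum_bound
  rw [← tendsto_add_atTop_iff_nat 1]
  have h0 : Tendsto (fun N : ℕ => (16/27:ℝ)^N * C) atTop (𝓝 0) := by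
    simpa using (tendsto_pow_atTop_nhds_zero_of_lt_one (r := (16/27:ℝ)) (by norm_num) (by norm_num)).mul_const C
  rw [tendsto_iff_norm_sub_tendsto_zero]
  refine squeeze_zero (fun _ => norm_nonneg _) (fun N => ?_) h0
  have h1 : Tendsto (fun K => ∑ n ∈ Finset.range (N+1), GG n K) atTop (𝓝 0) := by
    simpa using tendsto_finsetSum (Finset.range (N+1)) fun n _ => GG_tendsto n
  have h2 := ((tendsto_const_nhds (x := ∑ n ∈ Finset.range (N+1), GG n 0)).sub (leibniz.add h1)).norm
  rw [add_zero] at h2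
  refine le_of_tendsto h2 (Eventually.of_forall fun K => ?_)
  rw [Real.norm_eq_abs, ← abs_neg]
  refine le_of_eq_of_le (congrArg abs ?_) (hC N K)
  rw [wz_sum (N+1) K]; ring

lemma term_eq (k : ℕ) : (4/27 : ℝ) ^ k * (risingFactorial (1) k * risingFactorial (1/2) k * risingFactorial (1/2) k * risingFactorial (1/2) k) /
        (risingFactorial (7/6) k * risingFactorial (5/4) k * risingFactorial (7/4) k * risingFactorial (11/6) k)
     = PP k 0 * (45 * (2*k+1) / 8 / dd k 0) := by
  induction k with
  | zero => simp [PP, rf_zero, dd]; norm_num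
  | succ k ih =>
    simp only [rf_succ, PP_n]
    have e : ∀ p a b c d A B C D x y z w : ℝ, p * (4/27) * (a*x * (b*y) * (c*y) * (d*y)) / (A * z * (B * w) * (C*(7/4+k)) * (D * (11/6+k))) =
      (p * (a*b*c*d)/(A*B*C*D)) * (4/27 * (x*y*y*y)/(z*w*(7/4+k)*(11/6+k))) := by
      intros; rw [div_mul_div_comm]; congr 1 <;> ring
    rw [pow_succ, e, ih, mul_assoc (PP k 0), mul_assoc (PP k 0)]
    refine congrArg (fun t => PP k 0 * t) ?_
    unfold rn dd
    push_cast
    simp only [add_zero]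
    rw [div_div, div_div, div_mul_div_comm, div_mul_div_comm, div_eq_div_iff (by positivity) (by positivity)]
    ring

theorem stmt_13 :
    45 * Real.pi / 4 =
      ∑' k : ℕ, (4/27 : ℝ) ^ k * (risingFactorial (1) k * risingFactorial (1/2) k * risingFactorial (1/2) k * risingFactorial (1/2) k) /
        (risingFactorial (7/6) k * risingFactorial (5/4) k * risingFactorial (7/4) k * risingFactorial (11/6) k) * (184 * (k:ℝ)^3 + 338 * (k:ℝ)^2 + 193 * (k:ℝ) + 32) := by
  have hG : HasSum (fun n => GG n 0) (Real.pi/4) := by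
    rw [hasSum_iff_tendsto_nat_of_nonneg]
    · exact GG_sum
    · intro n
      have := PP_pos n 0
      unfold GG qq dd
      positivity
  have h := (hG.mul_left 45).tsum_eq
  rw [mul_div_assoc, ← h]
  refine tsum_congr fun k => ?_
  rw [term_eq]
  unfold GG qq
  simp only [Nat.cast_zero, pow_zero]
  ring
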